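/- (Spectral representation of the wave vector.) Let d ≥ 2 be an integer, n a prime, X = (ℤ/nℤ)^d, η = e^{2π√−1/n}, and let w_0, …, w_d be nonnegative reals with Σ w_i = 1; define κ_j = (n−1)^j C(d,j), ρ_i = Σ_{j=0}^d (w_j/κ_j) K_j(i), and the coin matrix C_{y,y'} = 2√((w_{|y|}/κ_{|y|})(w_{|y'|}/κ_{|y'|})) − δ_{y,y'}. Assume −1/(n−1) < ρ_j < 1 for all j ∈ {1, …, d}. For each such j, let μ_j^{(1)}, …, μ_j^{(n)} be the complex zeros (with multiplicity) of (−z)^n + 2ρ_j·Σ_{i=1}^{n−1}(−z)^i + 1, and assume they are pairwise distinct. Define the wave vector by ψ_{y,x}(0) = δ_{x,0}·√(w_{|y|}/κ_{|y|}) and ψ_{y,x}(t+1) = Σ_{y'∈X} C_{y,y'} ψ_{y',x⊕y}(t). Then for all t ∈ ℕ and all x, y ∈ X: ψ_{y,x}(t) = (1/n^d)·√(w_{|y|}/κ_{|y|})·Σ_{k=0}^{n−1} Σ_{l=0}^{n−1} (η^{lk}/n)·{ 1 + Σ_{j=1}^d K_j(|x ⊕ l·y|)·[ (−η^{−k})^t·(1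 − Σ_{i=1}^n 2c_j^{(i)}/(1 + η^k μ_j^{(i)})) + Σ_{i=1}^n 2c_j^{(i)}(μ_j^{(i)})^t/(1 + η^k μ_j^{(i)}) ] }, where c_j^{(i)} = [ (μ_j^{(i)})^n + (1−ρ_j)(μ_j^{(i)})^{n−1} − ρ_j(−1)^n ] / [ n(μ_j^{(i)})^n + (n − 2ρ_j(n−1))(μ_j^{(i)})^{n−1} − 2ρ_j(−1)^n Σ_{k=0}^{n−2}(−μ_j^{(i)})^k ] and l·y denotes the scalar multiple of y in (ℤ/nℤ)^d. -/

import Mathlib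

/-- The Krawtchouk polynomial value
`K_i(j) = Σ_{l=0}^{i} (-1)^l (n-1)^{i-l} C(j,l) C(d-j, i-l)`. -/
noncomputable def kraw (n d i j : ℕ) : ℝ :=
  ∑ l ∈ Finset.range (i + 1),
    (-1 : ℝ) ^ l * ((n - 1 : ℕ) : ℝ) ^ (i - l) * (j.choose l) * ((d - j).choose (i - l))

/-- `κ_j = (n-1)^j C(d,j)`. -/
noncomputable def kap (n d j : ℕ) : ℝ := ((n - 1 : ℕ) : ℝ) ^ j * (d.choose j)

/-- The coin matrix `C_{y,y'} = 2√((w_{|y|}/κ_{|y|})(w_{|y'|}/κ_{|y'|})) - δ_{y,y'}`. -/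
noncomputable def coin (n d : ℕ) (w : ℕ → ℝ) (y y' : Fin d → ZMod n) : ℝ :=
  2 * Real.sqrt ((w (hammingNorm y) / kap n d (hammingNorm y)) *
      (w (hammingNorm y') / kap n d (hammingNorm y'))) - if y = y' then 1 else 0

/-- The coefficient `c_j^{(i)}` of Theorem 5.1:
`c = (μ^n + (1-ρ)μ^{n-1} - ρ(-1)^n) /
  (nμ^n + (n - 2ρ(n-1))μ^{n-1} - 2ρ(-1)^n Σ_{k=0}^{n-2}(-μ)^k)`. -/
noncomputable def cCoef (n : ℕ) (ρ : ℝ) (μ : ℂ) : ℂ :=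
  (μ ^ n + (1 - (ρ : ℂ)) * μ ^ (n - 1) - (ρ : ℂ) * (-1 : ℂ) ^ n) /
    ((n : ℂ) * μ ^ n + ((n : ℂ) - 2 * (ρ : ℂ) * ((n : ℂ) - 1)) * μ ^ (n - 1) -
      2 * (ρ : ℂ) * (-1 : ℂ) ^ n * ∑ k ∈ Finset.range (n - 1), (-μ) ^ k)


lemma charSum {n : ℕ} [NeZero n] {ι : Type*} (s : Finset ι) (f : ι → ZMod n) :
    (ZMod.stdAddChar (∑ i ∈ s, f i) : ℂ) = ∏ i ∈ s, ZMod.stdAddChar (f i) := by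
  classical
  induction s using Finset.induction with
  | empty => simp
  | insert a s ha ih => rw [Finset.sum_insert ha, Finset.prod_insert ha, AddChar.map_add_eq_mul, ih]

open Polynomial in
lemma krawGen {n d : ℕ} [NeZero n] (z : Fin d → ZMod n) :
    (∑ ξ : Fin d → ZMod n, C (ZMod.stdAddChar (ξ ⬝ᵥ z)) * (X:ℂ[X]) ^ (hammingNorm ξ)) =
      (1 - X) ^ hammingNorm z * (1 + C (((n - 1 : ℕ)) : ℂ) * X) ^ (d - hammingNorm z) := by
  have h1 : ∀ a : ZMod n, (∑ b : ZMod n, C (ZMod.stdAddChar (b * a)) * (X:ℂ[X]) ^ (if b ≠ 0 then 1 else 0)) =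
      if a ≠ 0 then 1 - X else (1 + C (((n - 1 : ℕ)) : ℂ) * X) := by
    intro a
    have hn : 1 ≤ n := Nat.one_le_iff_ne_zero.2 (NeZero.ne n)
    have h2 : (∑ b : ZMod n, (ZMod.stdAddChar (b * a) : ℂ)) = if a = 0 then (n:ℂ) else 0 := by
      rw [AddChar.sum_mulShift a (ZMod.isPrimitive_stdAddChar n)]
      simp
    have h3 : (∑ b : ZMod n, C (ZMod.stdAddChar (b * a)) * (X:ℂ[X]) ^ (if b ≠ 0 then 1 else 0)) =
      ∑ b : ZMod n, (C (ZMod.stdAddChar (b * a)) * X + if b = 0 then (1 - X) else 0) := by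
      refine Finset.sum_congr rfl fun b _ => ?_
      by_cases hb : b = 0 <;> simp [hb]
    rw [h3, Finset.sum_add_distrib, ← Finset.sum_mul, ← map_sum, h2]
    by_cases ha : a = 0
    · simp [ha, Nat.cast_sub hn]; ring
    · simp [ha]
  have h4 : ∀ ξ : Fin d → ZMod n, C (ZMod.stdAddChar (ξ ⬝ᵥ z)) * (X:ℂ[X]) ^ (hammingNorm ξ) =
     ∏ i, (C (ZMod.stdAddChar (ξ i * z i)) * (X:ℂ[X]) ^ (if ξ i ≠ 0 then 1 else 0)) := by
    intro ξ
    rw [Finset.prod_mul_distrib, Finset.prod_pow_eq_pow_sum, ← map_prod]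
    congr 2
    · rw [dotProduct, charSum]
    · simp only [hammingNorm, Finset.card_filter]
  simp_rw [h4]
  rw [← Fintype.prod_sum (fun i b => C (ZMod.stdAddChar (b * z i)) * (X:ℂ[X]) ^ (if b ≠ 0 then 1 else 0))]
  simp_rw [h1]
  rw [Finset.prod_ite, Finset.prod_const, Finset.prod_const]
  congr 2
  have := Finset.card_filter_add_card_filter_not (s := (Finset.univ : Finset (Fin d))) (fun i => z i ≠ 0)
  simp only [Finset.card_univ, Fintype.card_fin] at this
  unfold hammingNorm
  omega

open Polynomial in
lemma krawChar {n d : ℕ} [NeZero n] (j : ℕ) (z : Fin d → ZMod n) :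
    ((kraw n d j (hammingNorm z) : ℝ) : ℂ) =
      ∑ ξ : Fin d → ZMod n, if hammingNorm ξ = j then ZMod.stdAddChar (ξ ⬝ᵥ z) else 0 := by
  have h := congrArg (fun p => Polynomial.coeff p j) (krawGen z)
  simp only [finsetSum_coeff, coeff_C_mul, coeff_X_pow] at h
  have h2 : ∀ ξ : Fin d → ZMod n, (if hammingNorm ξ = j then (ZMod.stdAddChar (ξ ⬝ᵥ z) : ℂ) else 0)
      = ZMod.stdAddChar (ξ ⬝ᵥ z) * (if j = hammingNorm ξ then 1 else 0) := by
    intro ξ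
    simp [eq_comm]
  simp_rw [h2]
  rw [h, coeff_mul, Finset.Nat.sum_antidiagonal_eq_sum_range_succ_mk, kraw]
  push_cast
  refine Finset.sum_congr rfl fun l _ => ?_
  have h3 : ((1 - X : ℂ[X]) ^ hammingNorm z).coeff l = (-1) ^ l * ((hammingNorm z).choose l : ℂ) := by
    have : (1 - X : ℂ[X]) ^ hammingNorm z = ((1 + X) ^ hammingNorm z).comp (C (-1) * X) := by
      simp [sub_eq_add_neg]
    rw [this, comp_C_mul_X_coeff, coeff_one_add_X_pow]
    ring
  have h4 : ∀ (a : ℂ) (m k : ℕ), ((1 + C a * X : ℂ[X]) ^ m).coeff k = a ^ k * (m.choose k : ℂ) := by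
    intro a m k
    have : (1 + C a * X : ℂ[X]) ^ m = ((1 + X) ^ m).comp (C a * X) := by
      simp
    rw [this, comp_C_mul_X_coeff, coeff_one_add_X_pow]
    ring
  rw [h3, h4]
  ring

lemma hammingNorm_le {n d : ℕ} (y : Fin d → ZMod n) : hammingNorm y ≤ d := by
  simpa using hammingNorm_le_card_fintype (x := y)

lemma kap_pos {n d j : ℕ} (hn : 2 ≤ n) (hj : j ≤ d) : 0 < kap n d j := by
  unfold kap
  have : 0 < n - 1 := by omega
  have := Nat.choose_pos hj
  positivity

lemma kraw_zero (n d j : ℕ) : kraw n d j 0 = kap n d j := by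
  unfold kraw kap
  rw [Finset.sum_eq_single 0]
  · simp
  · intro b _ hb
    rw [Nat.choose_eq_zero_of_lt (Nat.pos_of_ne_zero hb)]
    simp
  · simp

lemma rhoChar {n d : ℕ} [NeZero n] (w ρ : ℕ → ℝ)
    (hρ : ∀ i, ρ i = ∑ j ∈ Finset.range (d + 1), w j / kap n d j * kraw n d j i)
    (z : Fin d → ZMod n) :
    (ρ (hammingNorm z) : ℂ) = ∑ y : Fin d → ZMod n,
      ((w (hammingNorm y) / kap n d (hammingNorm y) : ℝ) : ℂ) * ZMod.stdAddChar (y ⬝ᵥ z) := by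
  rw [hρ]
  simp only [Complex.ofReal_sum, Complex.ofReal_mul, krawChar, Finset.mul_sum]
  rw [Finset.sum_comm]
  refine Finset.sum_congr rfl fun y _ => ?_
  rw [Finset.sum_eq_single (hammingNorm y)]
  · simp
  · intro b _ hb
    simp [hb.symm]
  · intro h
    exact absurd (Finset.mem_range.2 (Nat.lt_succ_of_le (hammingNorm_le y))) h

lemma rho_zero {n d : ℕ} (hn : 2 ≤ n) (w ρ : ℕ → ℝ)
    (hsum : ∑ i ∈ Finset.range (d + 1), w i = 1)
    (hρ : ∀ i, ρ i = ∑ j ∈ Finset.range (d + 1), w j / kap n d j * kraw n d j i) :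
    ρ 0 = 1 := by
  rw [hρ, ← hsum]
  refine Finset.sum_congr rfl fun j hj => ?_
  rw [kraw_zero, div_mul_cancel₀]
  exact (kap_pos hn (Nat.lt_succ_iff.1 (Finset.mem_range.1 hj))).ne'

lemma sumChar {n d : ℕ} [NeZero n] (x : Fin d → ZMod n) :
    (∑ ξ : Fin d → ZMod n, (ZMod.stdAddChar (ξ ⬝ᵥ x) : ℂ)) = if x = 0 then (n:ℂ) ^ d else 0 := by
  have h1 : ∀ ξ : Fin d → ZMod n, (ZMod.stdAddChar (ξ ⬝ᵥ x) : ℂ) =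
      ∏ i, ZMod.stdAddChar (ξ i * x i) := fun ξ => by rw [dotProduct, charSum]
  have h2 : ∀ a : ZMod n, (∑ b : ZMod n, (ZMod.stdAddChar (b * a) : ℂ)) = if a = 0 then (n:ℂ) else 0 := by
    intro a
    rw [AddChar.sum_mulShift a (ZMod.isPrimitive_stdAddChar n)]
    simp
  simp_rw [h1]
  rw [← Fintype.prod_sum (fun i b => (ZMod.stdAddChar (b * x i) : ℂ))]
  simp_rw [h2]
  split_ifs with hx
  · simp [hx]
  · obtain ⟨i, hi⟩ := Function.ne_iff.1 hx
    exact Finset.prod_eq_zero (Finset.mem_univ i) (if_neg hi)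

lemma sumIcc (u : ℂ) (m : ℕ) :
    ∑ i ∈ Finset.Icc 1 m, u ^ i = u * ∑ i ∈ Finset.range m, u ^ i := by
  induction m with
  | zero => simp
  | succ m ih =>
    rw [Finset.sum_Icc_succ_top (by omega), ih, Finset.sum_range_succ]
    ring

/-- The roots are not `n`-th roots of `(-1)^n`. -/
lemma root_ne {n : ℕ} (hn : 2 ≤ n) {r : ℝ} (hlo : -(1 / ((n : ℝ) - 1)) < r) (hhi : r < 1) {u : ℂ}
    (hu : u ^ n + 2 * (r : ℂ) * (∑ i ∈ Finset.Icc 1 (n - 1), u ^ i) + 1 = 0) : 1 - u ^ n ≠ 0 := by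
  intro h
  have hun : u ^ n = 1 := (sub_eq_zero.1 h).symm
  have hs : ∑ i ∈ Finset.range n, u ^ i = 1 + ∑ i ∈ Finset.Icc 1 (n - 1), u ^ i := by
    obtain ⟨m, rfl⟩ : ∃ m, n = m + 1 := ⟨n - 1, by omega⟩
    rw [sumIcc, Finset.sum_range_succ', Finset.mul_sum]
    simp only [pow_succ', Nat.add_sub_cancel, pow_zero]
    ring
  by_cases h1 : u = 1
  · subst h1
    simp only [one_pow, Finset.sum_const, Nat.card_Icc, nsmul_eq_mul] at hu
    have hnn : ((n - 1 + 1 - 1 : ℕ) : ℂ) = (n:ℂ) - 1 := by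
      rw [Nat.add_sub_cancel, Nat.cast_sub (by omega)]; simp
    rw [hnn] at hu
    have h2 : (1 + 2 * r * ((n:ℝ) - 1) + 1 : ℝ) = 0 := by
      have : ((1 + 2 * r * ((n:ℝ) - 1) + 1 : ℝ) : ℂ) = 0 := by
        push_cast; rw [← hu]; ring
      exact_mod_cast this
    have hpos : (0:ℝ) < (n:ℝ) - 1 := by
      have : (2:ℝ) ≤ n := by exact_mod_cast hn
      linarith
    have := mul_lt_mul_of_pos_right hlo hpos
    rw [neg_mul, one_div, inv_mul_cancel₀ hpos.ne'] at this
    linarith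
  · have hg := mul_neg_geom_sum u n
    rw [hs, hun, sub_self] at hg
    rcases mul_eq_zero.1 hg with h2 | h2
    · exact h1 (sub_eq_zero.1 h2).symm
    · have h3 : ∑ i ∈ Finset.Icc 1 (n - 1), u ^ i = -1 := by linear_combination h2
      rw [h3, hun] at hu
      have h4 : (2 - 2 * r : ℝ) = 0 := by
        have : ((2 - 2 * r : ℝ) : ℂ) = 0 := by
          push_cast; rw [← hu]; ring
        exact_mod_cast this
      linarith


open Polynomial in
lemma derivRoot {n : ℕ} (hn : 2 ≤ n) (r : ℝ) (μ : Fin n → ℂ)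
    (hμ : ∀ z : ℂ, (-z) ^ n + 2 * (r : ℂ) * (∑ i ∈ Finset.Icc 1 (n - 1), (-z) ^ i) + 1 =
        (-1 : ℂ) ^ n * ∏ i, (z - μ i)) (i : Fin n) :
    (n : ℂ) * μ i ^ n + ((n : ℂ) - 2 * (r : ℂ) * ((n : ℂ) - 1)) * μ i ^ (n - 1) -
      2 * (r : ℂ) * (-1 : ℂ) ^ n * ∑ k ∈ Finset.range (n - 1), (-μ i) ^ k =
    (1 + μ i) * eval (μ i) (derivative (Lagrange.nodal Finset.univ μ)) := by
  have hg : ∀ u : ℂ, (1 - u) * ∑ k ∈ Finset.range (n - 1), u ^ k = 1 - u ^ (n - 1) := fun u =>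
    mul_neg_geom_sum u (n - 1)
  have hroot := hμ (μ i)
  rw [Finset.prod_eq_zero (Finset.mem_univ i) (sub_self _), mul_zero, sumIcc] at hroot
  have hP : (1 + X) * ((-X) ^ n + 1) + C (2 * (r : ℂ)) * (-X - (-X) ^ n) =
      C ((-1) ^ n) * ((1 + X) * Lagrange.nodal Finset.univ μ) := by
    refine Polynomial.funext fun z => ?_
    have h1 := hμ z
    have h2 := hg (-z)
    have h3 : (-z) ^ n = -z * (-z) ^ (n - 1) := by
      rw [← pow_succ', Nat.sub_add_cancel (by omega)]
    rw [sumIcc] at h1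
    simp only [eval_add, eval_mul, eval_one, eval_X, eval_pow, eval_neg, eval_C, eval_sub,
      Lagrange.eval_nodal]
    linear_combination (1 + z) * h1 + (2 * (r:ℂ) * z) * h2 - 2 * (r:ℂ) * h3
  have hD := congrArg (fun p => eval (μ i) (derivative p)) hP
  simp only [derivative_add, derivative_mul, derivative_one, derivative_X, derivative_pow,
    derivative_neg, derivative_C, derivative_sub, eval_add, eval_mul, eval_one, eval_X, eval_pow,
    eval_neg, eval_C, eval_sub, eval_zero,
      Lagrange.eval_nodal_at_node (Finset.mem_univ i)] at hD
  have e1 : ((-1:ℂ) ^ n) * (-1) ^ n = 1 := by rw [← mul_pow]; simp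
  have e2 : (-μ i) ^ n = (-1) ^ n * μ i ^ n := by rw [← mul_pow]; simp
  have e3 : (-μ i) ^ (n - 1) = -(-1) ^ n * μ i ^ (n - 1) := by
    rw [neg_pow (μ i)]
    have : (-1:ℂ) ^ n = -1 * (-1) ^ (n - 1) := by rw [← pow_succ', Nat.sub_add_cancel (by omega)]
    rw [this]; ring
  have e4 : μ i ^ n = μ i * μ i ^ (n - 1) := by
    rw [← pow_succ', Nat.sub_add_cancel (by omega)]
  have h2 := hg (-μ i)
  rw [e2] at hroot hD
  rw [e3] at h2 hD
  set S := ∑ k ∈ Finset.range (n - 1), (-μ i) ^ k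
  set E := eval (μ i) (derivative (Lagrange.nodal Finset.univ μ))
  set m := μ i
  set A := m ^ (n - 1)
  set s : ℂ := (-1) ^ n
  rw [e4] at hroot hD ⊢
  linear_combination s * hD - s * hroot - 2 * (r:ℂ) * s * h2 -
    (n * A * (1 + m) - 2 * r * n * A + 2 * r * A - (1 + m) * E) * e1

lemma one_add_ne {n : ℕ} {v m : ℂ} (hv : v ^ n = 1) (h : 1 - (-m) ^ n ≠ 0) : 1 + v * m ≠ 0 := by
  intro h0
  apply h
  have : (v * (-m)) ^ n = 1 := by
    rw [show v * (-m) = 1 by linear_combination -h0, one_pow]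
  rw [mul_pow, hv, one_mul] at this
  rw [this, sub_self]

open Polynomial in
lemma cauchySum {n : ℕ} (hn : 2 ≤ n) {r : ℝ} (hlo : -(1 / ((n : ℝ) - 1)) < r) (hhi : r < 1)
    (μ : Fin n → ℂ)
    (hμ : ∀ z : ℂ, (-z) ^ n + 2 * (r : ℂ) * (∑ i ∈ Finset.Icc 1 (n - 1), (-z) ^ i) + 1 =
        (-1 : ℂ) ^ n * ∏ i, (z - μ i)) (hinj : Function.Injective μ) {v : ℂ} (hv : v ^ n = 1) :
    ∑ i, 2 * cCoef n r (μ i) / (1 + v * μ i) = 1 := by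
  have hne : ∀ i, 1 - (-μ i) ^ n ≠ 0 := fun i => by
    refine root_ne hn hlo hhi ?_
    rw [hμ, Finset.prod_eq_zero (Finset.mem_univ i) (sub_self _), mul_zero]
  have hv0 : v ≠ 0 := by
    rintro rfl
    rw [zero_pow (by omega)] at hv
    exact zero_ne_one hv
  let R : ℂ[X] := -C ((-1) ^ n) * ((-X) ^ (n - 1) + C (r:ℂ) * ∑ k ∈ Finset.range (n - 1), (-X) ^ k)
  have hR : ∀ z, eval z R = -(-1) ^ n * ((-z) ^ (n - 1) + (r:ℂ) * ∑ k ∈ Finset.range (n - 1), (-z) ^ k) := by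
    intro z
    simp [R, eval_finsetSum]
  have hdeg : R.degree < (Finset.univ : Finset (Fin n)).card := by
    simp only [Finset.card_univ, Fintype.card_fin]
    have hx : ∀ k, k < n → ((-X : ℂ[X]) ^ k).degree < n := by
      intro k hk
      rw [degree_pow, degree_neg, degree_X]
      simpa using hk
    rw [← mem_degreeLT]
    have hx' : ∀ k, k < n → ((-X : ℂ[X]) ^ k) ∈ degreeLT ℂ n := fun k hk => mem_degreeLT.2 (hx k hk)
    have : R = (-(-1) ^ n : ℂ) • ((-X) ^ (n - 1) + (r:ℂ) • ∑ k ∈ Finset.range (n - 1), (-X) ^ k) := by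
      simp only [R, smul_eq_C_mul, map_neg]
    rw [this]
    refine Submodule.smul_mem _ _ (Submodule.add_mem _ (hx' _ (by omega)) (Submodule.smul_mem _ _ (Submodule.sum_mem _ fun k hk => hx' k ?_)))
    have := Finset.mem_range.1 hk
    omega
  have hint := Lagrange.eq_interpolate (s := Finset.univ) (v := μ) (hinj.injOn) hdeg
  have hanode : ∀ i ∈ Finset.univ, -v⁻¹ ≠ μ i := by
    intro i _ h
    apply one_add_ne hv (hne i)
    rw [← h, mul_neg, mul_inv_cancel₀ hv0]; ring
  have hev := congrArg (eval (-v⁻¹)) hint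
  rw [Lagrange.eval_interpolate_not_at_node _ hanode] at hev
  set S := ∑ i, Lagrange.nodalWeight Finset.univ μ i * (-v⁻¹ - μ i)⁻¹ * eval (μ i) R with hS
  have hterm : ∀ i, 2 * cCoef n r (μ i) / (1 + v * μ i) =
      -2 * v⁻¹ * (Lagrange.nodalWeight Finset.univ μ i * (-v⁻¹ - μ i)⁻¹ * eval (μ i) R) := by
    intro i
    have h1 : 1 + μ i ≠ 0 := by
      have := one_add_ne (one_pow n) (hne i)
      rwa [one_mul] at this
    have h2 := one_add_ne hv (hne i)
    have h3 : -v⁻¹ - μ i = -v⁻¹ * (1 + v * μ i) := by field_simp; ring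
    have hnum : μ i ^ n + (1 - (r : ℂ)) * μ i ^ (n - 1) - (r : ℂ) * (-1 : ℂ) ^ n
        = (1 + μ i) * eval (μ i) R := by
      rw [hR]
      have hg := mul_neg_geom_sum (-μ i) (n - 1)
      have e1 : ((-1:ℂ) ^ n) * (-1) ^ n = 1 := by rw [← mul_pow]; simp
      have e3 : (-μ i) ^ (n - 1) = -(-1) ^ n * μ i ^ (n - 1) := by
        rw [neg_pow (μ i)]
        have : (-1:ℂ) ^ n = -1 * (-1) ^ (n - 1) := by rw [← pow_succ', Nat.sub_add_cancel (by omega)]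
        rw [this]; ring
      have e4 : μ i ^ n = μ i * μ i ^ (n - 1) := by
        rw [← pow_succ', Nat.sub_add_cancel (by omega)]
      rw [e3] at hg ⊢
      rw [e4]
      linear_combination (-1) ^ n * (r:ℂ) * hg + (- (1 + μ i) * μ i ^ (n - 1) + (r:ℂ) * μ i ^ (n-1)) * e1
    rw [cCoef, derivRoot hn r μ hμ i, hnum, Lagrange.nodalWeight_eq_eval_derivative_nodal (Finset.mem_univ i), h3,
      mul_div_mul_left _ _ h1, mul_inv, inv_neg, inv_inv]
    field_simp
  simp_rw [hterm]
  rw [← Finset.mul_sum, ← hS]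
  have hvi : (v⁻¹) ^ n = 1 := by rw [inv_pow, hv, inv_one]
  have hPne : (v⁻¹) ^ n + 2 * (r : ℂ) * (∑ i ∈ Finset.Icc 1 (n - 1), (v⁻¹) ^ i) + 1 ≠ 0 := by
    intro h
    exact root_ne hn hlo hhi h (by rw [hvi, sub_self])
  apply mul_left_cancel₀ hPne
  have h1 := hμ (-v⁻¹)
  rw [← Lagrange.eval_nodal] at h1
  rw [hR] at hev
  rw [neg_neg] at h1 hev
  rw [sumIcc] at h1 ⊢
  have e1 : ((-1:ℂ) ^ n) * (-1) ^ n = 1 := by rw [← mul_pow]; simp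
  have e4 : v⁻¹ ^ n = v⁻¹ * v⁻¹ ^ (n - 1) := by
    rw [← pow_succ', Nat.sub_add_cancel (by omega)]
  rw [h1, mul_one]
  have : (-1) ^ n * eval (-v⁻¹) (Lagrange.nodal Finset.univ μ) * (-2 * v⁻¹ * S) =
     2 * v⁻¹ ^ n + 2 * r * (v⁻¹ * ∑ i ∈ Finset.range (n - 1), v⁻¹ ^ i) := by
    rw [e4]
    linear_combination (2 * v⁻¹ * (-1)^n) * hev + 2 * v⁻¹ * ((v⁻¹) ^ (n - 1) + (r:ℂ) * ∑ k ∈ Finset.range (n - 1), (v⁻¹) ^ k) * e1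
  rw [this, ← h1, hvi]
  ring

lemma geomInv {n : ℕ} {v m : ℂ} (hv : v ^ n = 1) (h : 1 - (-m) ^ n ≠ 0) :
    1 / (1 + v * m) = (∑ k ∈ Finset.range n, v ^ k * (-m) ^ k) / (1 - (-m) ^ n) := by
  have h1 := one_add_ne hv h
  have hg := mul_neg_geom_sum (v * (-m)) n
  rw [mul_pow, hv, one_mul] at hg
  simp_rw [mul_pow] at hg
  rw [div_eq_div_iff h1 h, ← hg]
  ring

lemma char_pow_n {n : ℕ} [NeZero n] (a : ZMod n) : (ZMod.stdAddChar a : ℂ) ^ n = 1 := by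
  rw [← AddChar.map_nsmul_eq_pow]
  simp

lemma norm_mul_ne {n d : ℕ} (hn : n.Prime) (a : ZMod n) (ha : a ≠ 0) (ξ : Fin d → ZMod n) :
    hammingNorm (a • ξ) = hammingNorm ξ := by
  have : Fact n.Prime := ⟨hn⟩
  exact hammingNorm_smul (fun _ => (IsSMulRegular.of_ne_zero ha)) ξ

lemma halfSum {n d : ℕ} (hn : n.Prime) [NeZero n] (w ρ : ℕ → ℝ)
    (hsum : ∑ i ∈ Finset.range (d + 1), w i = 1)
    (hρ : ∀ i, ρ i = ∑ j ∈ Finset.range (d + 1), w j / kap n d j * kraw n d j i)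
    (ξ : Fin d → ZMod n) {m : ℂ} (h : 1 - (-m) ^ n ≠ 0)
    (hroot : (-m) ^ n + 2 * (ρ (hammingNorm ξ) : ℂ) * (∑ i ∈ Finset.Icc 1 (n - 1), (-m) ^ i) + 1 = 0) :
    ∑ y : Fin d → ZMod n, ((w (hammingNorm y) / kap n d (hammingNorm y) : ℝ) : ℂ) *
      (1 / (1 + ZMod.stdAddChar (-(ξ ⬝ᵥ y)) * m)) = 1 / 2 := by
  have hk : ∀ k ∈ Finset.range n, ∑ y : Fin d → ZMod n,
      ((w (hammingNorm y) / kap n d (hammingNorm y) : ℝ) : ℂ) *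
        (ZMod.stdAddChar (-(ξ ⬝ᵥ y)) ^ k * (-m) ^ k) =
      (if k = 0 then 1 else (ρ (hammingNorm ξ) : ℂ)) * (-m) ^ k := by
    intro k hk
    have h1 := rhoChar w ρ hρ ((-(k : ZMod n)) • ξ)
    have h2 : ∀ y : Fin d → ZMod n, y ⬝ᵥ ((-(k : ZMod n)) • ξ) = k • (-(ξ ⬝ᵥ y)) := by
      intro y
      rw [dotProduct_smul, dotProduct_comm]
      simp
    simp_rw [h2, AddChar.map_nsmul_eq_pow] at h1
    simp_rw [← mul_assoc]
    rw [← Finset.sum_mul, ← h1]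
    congr 1
    split_ifs with h0
    · subst h0
      simp [rho_zero hn.two_le w ρ hsum hρ]
    · rw [norm_mul_ne hn]
      rw [neg_ne_zero, Ne, ZMod.natCast_eq_zero_iff]
      exact Nat.not_dvd_of_pos_of_lt (Nat.pos_of_ne_zero h0) (Finset.mem_range.1 hk)
  simp_rw [fun y : Fin d → ZMod n => geomInv (char_pow_n (-(ξ ⬝ᵥ y))) h, ← mul_div_assoc]
  rw [← Finset.sum_div]
  simp_rw [Finset.mul_sum]
  rw [Finset.sum_comm, Finset.sum_congr rfl hk]
  have hs : ∑ k ∈ Finset.range n, (if k = 0 then 1 else (ρ (hammingNorm ξ) : ℂ)) * (-m) ^ k =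
      1 + ρ (hammingNorm ξ) * (∑ i ∈ Finset.Icc 1 (n - 1), (-m) ^ i) := by
    obtain ⟨q, rfl⟩ : ∃ q, n = q + 1 := ⟨n - 1, by have := hn.two_le; omega⟩
    rw [sumIcc, Finset.sum_range_succ', Finset.mul_sum, Finset.mul_sum]
    simp only [pow_succ', Nat.add_sub_cancel, pow_zero]
    simp [add_comm]
  rw [hs, div_eq_div_iff h two_ne_zero]
  linear_combination hroot

/-- Spectral representation of the wave vector, Theorem 5.1:
for the quantum walk on `H(d,n)` with coin built from weights `w`, eigenvalues
`-1/(n-1) < ρ_j < 1` (`j ∈ {1,…,d}`) and pairwise distinct zeros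
`μ_j^{(1)},…,μ_j^{(n)}` of `(-z)^n + 2ρ_j Σ_{i=1}^{n-1}(-z)^i + 1`, the wave
vector `ψ_{y,x}(t)` admits the stated spectral representation.
(The instance `[NeZero n]` is automatic from primality of `n`.) -/
theorem spectral_representation (n d : ℕ) (hn : n.Prime) [NeZero n] (hd : 2 ≤ d) (η : ℂ)
    (hη : η = Complex.exp (2 * Real.pi * Complex.I / n))
    (w : ℕ → ℝ) (hw : ∀ i ∈ Finset.range (d + 1), 0 ≤ w i)
    (hsum : ∑ i ∈ Finset.range (d + 1), w i = 1)
    (ρ : ℕ → ℝ) (hρ : ∀ i, ρ i = ∑ j ∈ Finset.range (d + 1), w j / kap n d j * kraw n d j i)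
    (hlo : ∀ j ∈ Finset.Icc 1 d, -(1 / ((n : ℝ) - 1)) < ρ j)
    (hhi : ∀ j ∈ Finset.Icc 1 d, ρ j < 1)
    (μ : ℕ → Fin n → ℂ)
    (hμ : ∀ j ∈ Finset.Icc 1 d, ∀ z : ℂ,
      (-z) ^ n + 2 * (ρ j : ℂ) * (∑ i ∈ Finset.Icc 1 (n - 1), (-z) ^ i) + 1 =
        (-1 : ℂ) ^ n * ∏ i, (z - μ j i))
    (hdist : ∀ j ∈ Finset.Icc 1 d, Function.Injective (μ j))
    (ψ : ℕ → (Fin d → ZMod n) → (Fin d → ZMod n) → ℂ)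
    (hψ0 : ∀ (y x : Fin d → ZMod n), ψ 0 y x =
      (if x = 0 then 1 else 0) *
        (Real.sqrt (w (hammingNorm y) / kap n d (hammingNorm y)) : ℝ))
    (hψ : ∀ (t : ℕ) (y x : Fin d → ZMod n), ψ (t + 1) y x =
      ∑ y', ((coin n d w y y' : ℝ) : ℂ) * ψ t y' (x + y)) :
    ∀ (t : ℕ) (y x : Fin d → ZMod n), ψ t y x =
      (1 / (n : ℂ) ^ d) *
        (Real.sqrt (w (hammingNorm y) / kap n d (hammingNorm y)) : ℝ) *
        ∑ k ∈ Finset.range n, ∑ l ∈ Finset.range n, (η ^ (l * k) / (n : ℂ)) *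
          (1 + ∑ j ∈ Finset.Icc 1 d, (kraw n d j (hammingNorm (x + l • y)) : ℝ) *
            ((-(η ^ k)⁻¹) ^ t *
                (1 - ∑ i, 2 * cCoef n (ρ j) (μ j i) / (1 + η ^ k * μ j i)) +
              ∑ i, 2 * cCoef n (ρ j) (μ j i) * (μ j i) ^ t / (1 + η ^ k * μ j i))) := by
  have hn2 := hn.two_le
  have hn0 : (n : ℂ) ≠ 0 := Nat.cast_ne_zero.2 (NeZero.ne n)
  -- the amplitudes
  let a : (Fin d → ZMod n) → ℝ := fun y => w (hammingNorm y) / kap n d (hammingNorm y)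
  let s : (Fin d → ZMod n) → ℂ := fun y => (Real.sqrt (a y) : ℝ)
  have ha0 : ∀ y, 0 ≤ a y := fun y =>
    div_nonneg (hw _ (Finset.mem_range.2 (Nat.lt_succ_of_le (hammingNorm_le y))))
      (kap_pos hn2 (hammingNorm_le y)).le
  have hss : ∀ y, s y * s y = (a y : ℂ) := fun y => by
    simp only [s]
    rw [← Complex.ofReal_mul, Real.mul_self_sqrt (ha0 y)]
  have hcoin : ∀ y y', ((coin n d w y y' : ℝ) : ℂ) = 2 * s y * s y' - if y = y' then 1 else 0 := by
    intro y y'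
    have h1 : coin n d w y y' = 2 * (Real.sqrt (a y) * Real.sqrt (a y')) - if y = y' then 1 else 0 := by
      rw [← Real.sqrt_mul (ha0 y)]; rfl
    rw [h1]
    simp only [s]
    split_ifs <;> push_cast <;> ring
  have hasum : ∑ y, (a y : ℂ) = 1 := by
    have h1 := rhoChar w ρ hρ (0 : Fin d → ZMod n)
    rw [hammingNorm_zero, rho_zero hn2 w ρ hsum hρ] at h1
    simpa [a] using h1.symm
  have hmem : ∀ ξ : Fin d → ZMod n, ξ ≠ 0 → hammingNorm ξ ∈ Finset.Icc 1 d := fun ξ hξ =>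
    Finset.mem_Icc.2 ⟨Nat.one_le_iff_ne_zero.2 (hammingNorm_ne_zero_iff.2 hξ), hammingNorm_le ξ⟩
  have hroot : ∀ j ∈ Finset.Icc 1 d, ∀ i,
      (-μ j i) ^ n + 2 * (ρ j : ℂ) * (∑ l ∈ Finset.Icc 1 (n - 1), (-μ j i) ^ l) + 1 = 0 := by
    intro j hj i
    rw [hμ j hj, Finset.prod_eq_zero (Finset.mem_univ i) (sub_self _), mul_zero]
  have hne : ∀ j ∈ Finset.Icc 1 d, ∀ i, 1 - (-μ j i) ^ n ≠ 0 := fun j hj i =>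
    root_ne hn2 (hlo j hj) (hhi j hj) (hroot j hj i)
  -- Fourier-side solution
  let F : ℕ → ℂ → ℕ → ℂ := fun j v t =>
    if j = 0 then 1 else ∑ i, 2 * cCoef n (ρ j) (μ j i) * (μ j i) ^ t / (1 + v * μ j i)
  let G : (Fin d → ZMod n) → (Fin d → ZMod n) → ℕ → ℂ := fun ξ y t =>
    F (hammingNorm ξ) (ZMod.stdAddChar (-(ξ ⬝ᵥ y))) t
  have hG0 : ∀ ξ y, G ξ y 0 = 1 := by
    intro ξ y
    simp only [G, F]
    split_ifs with h
    · rfl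
    · have hj := hmem ξ (hammingNorm_ne_zero_iff.1 h)
      simpa using cauchySum hn2 (hlo _ hj) (hhi _ hj) _ (hμ _ hj) (hdist _ hj)
        (char_pow_n (-(ξ ⬝ᵥ y)))
  have hGs : ∀ ξ y t, G ξ y (t + 1) =
      ZMod.stdAddChar (ξ ⬝ᵥ y) * (2 * ∑ y', (a y' : ℂ) * G ξ y' t - G ξ y t) := by
    intro ξ y t
    by_cases hξ : ξ = 0
    · subst hξ
      simp only [G, F, hammingNorm_zero, if_true, mul_one, hasum, zero_dotProduct,
        AddChar.map_zero_eq_one]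
      norm_num
    · have hj := hmem ξ hξ
      have h0 : hammingNorm ξ ≠ 0 := hammingNorm_ne_zero_iff.2 hξ
      simp only [G, F, h0, if_false]
      have hA : ∑ y' : Fin d → ZMod n, (a y' : ℂ) * ∑ i, 2 * cCoef n (ρ (hammingNorm ξ)) (μ (hammingNorm ξ) i) *
          (μ (hammingNorm ξ) i) ^ t / (1 + ZMod.stdAddChar (-(ξ ⬝ᵥ y')) * μ (hammingNorm ξ) i) =
          ∑ i, cCoef n (ρ (hammingNorm ξ)) (μ (hammingNorm ξ) i) * (μ (hammingNorm ξ) i) ^ t := by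
        simp_rw [Finset.mul_sum]
        rw [Finset.sum_comm]
        refine Finset.sum_congr rfl fun i _ => ?_
        have h1 := halfSum hn w ρ hsum hρ ξ (hne _ hj i) (hroot _ hj i)
        calc _ = ∑ y' : Fin d → ZMod n, (2 * cCoef n (ρ (hammingNorm ξ)) (μ (hammingNorm ξ) i) *
              (μ (hammingNorm ξ) i) ^ t) * ((a y' : ℂ) *
              (1 / (1 + ZMod.stdAddChar (-(ξ ⬝ᵥ y')) * μ (hammingNorm ξ) i))) :=
              Finset.sum_congr rfl fun y' _ => by ring
          _ = _ := by
            rw [← Finset.mul_sum, h1]; ring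
      rw [hA, Finset.mul_sum, ← Finset.sum_sub_distrib, Finset.mul_sum]
      refine Finset.sum_congr rfl fun i _ => ?_
      have h1 := one_add_ne (char_pow_n (-(ξ ⬝ᵥ y))) (hne _ hj i)
      have h2 : (ZMod.stdAddChar (ξ ⬝ᵥ y) : ℂ) * ZMod.stdAddChar (-(ξ ⬝ᵥ y)) = 1 := by
        rw [← AddChar.map_add_eq_mul, add_neg_cancel, AddChar.map_zero_eq_one]
      rw [div_eq_iff h1, mul_assoc (ZMod.stdAddChar (ξ ⬝ᵥ y) : ℂ), sub_mul, div_mul_cancel₀ _ h1, pow_succ]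
      linear_combination (-2 * cCoef n (ρ (hammingNorm ξ)) (μ (hammingNorm ξ) i) *
          (μ (hammingNorm ξ) i) ^ t * μ (hammingNorm ξ) i) * h2
  have hmain : ∀ t y x, ψ t y x =
      (1 / (n : ℂ) ^ d) * ∑ ξ : Fin d → ZMod n, ZMod.stdAddChar (ξ ⬝ᵥ x) * (s y * G ξ y t) := by
    intro t
    induction t with
    | zero =>
      intro y x
      simp_rw [hG0, mul_one]
      rw [← Finset.sum_mul, sumChar, hψ0]
      split_ifs
      · rw [one_mul, ← mul_assoc, one_div, inv_mul_cancel₀ (pow_ne_zero _ hn0), one_mul]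
      · simp
    | succ t ih =>
      intro y x
      rw [hψ]
      simp_rw [ih, hcoin, hGs]
      calc _ = (1 / (n : ℂ) ^ d) * ∑ y', ∑ ξ : Fin d → ZMod n, ZMod.stdAddChar (ξ ⬝ᵥ (x + y)) *
            ((2 * s y * s y' - if y = y' then 1 else 0) * (s y' * G ξ y' t)) := by
              rw [Finset.mul_sum]
              refine Finset.sum_congr rfl fun y' _ => ?_
              rw [mul_left_comm, Finset.mul_sum]
              congr 1
              refine Finset.sum_congr rfl fun ξ _ => ?_
              ring
        _ = _ := by
          rw [Finset.sum_comm]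
          congr 1
          refine Finset.sum_congr rfl fun ξ _ => ?_
          rw [← Finset.mul_sum, dotProduct_add, AddChar.map_add_eq_mul]
          have h1 : ∑ y', (2 * s y * s y' - if y = y' then 1 else 0) * (s y' * G ξ y' t) =
              s y * (2 * ∑ y', (a y' : ℂ) * G ξ y' t - G ξ y t) := by
            simp_rw [sub_mul, ite_mul, one_mul, zero_mul]
            rw [Finset.sum_sub_distrib, Finset.sum_ite_eq, if_pos (Finset.mem_univ _), mul_sub,
              Finset.mul_sum, Finset.mul_sum]
            congr 1
            refine Finset.sum_congr rfl fun y' _ => ?_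
            rw [← hss]; ring
          rw [h1]; ring
  -- the formula
  have hηk : ∀ k : ℕ, η ^ k = ZMod.stdAddChar (k : ZMod n) := by
    intro k
    have h1 := ZMod.stdAddChar_coe (N := n) (k : ℤ)
    rw [Int.cast_natCast] at h1
    rw [h1, hη, ← Complex.exp_nat_mul]
    congr 1
    push_cast
    ring
  intro t y x
  have hbr : ∀ k ∈ Finset.range n, ∀ l ∈ Finset.range n, (η ^ (l * k) / (n : ℂ)) *
          (1 + ∑ j ∈ Finset.Icc 1 d, (kraw n d j (hammingNorm (x + l • y)) : ℝ) *
            ((-(η ^ k)⁻¹) ^ t *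
                (1 - ∑ i, 2 * cCoef n (ρ j) (μ j i) / (1 + η ^ k * μ j i)) +
              ∑ i, 2 * cCoef n (ρ j) (μ j i) * (μ j i) ^ t / (1 + η ^ k * μ j i))) =
      ∑ ξ : Fin d → ZMod n, ZMod.stdAddChar (ξ ⬝ᵥ x) *
        (ZMod.stdAddChar ((l : ZMod n) * ((k : ZMod n) + ξ ⬝ᵥ y)) / n * F (hammingNorm ξ) (η ^ k) t) := by
    intro k _ l _
    have hj : ∀ j ∈ Finset.Icc 1 d, ((kraw n d j (hammingNorm (x + l • y)) : ℝ) : ℂ) *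
            ((-(η ^ k)⁻¹) ^ t *
                (1 - ∑ i, 2 * cCoef n (ρ j) (μ j i) / (1 + η ^ k * μ j i)) +
              ∑ i, 2 * cCoef n (ρ j) (μ j i) * (μ j i) ^ t / (1 + η ^ k * μ j i)) =
        ((kraw n d j (hammingNorm (x + l • y)) : ℝ) : ℂ) * F j (η ^ k) t := by
      intro j hj
      have h1 := cauchySum hn2 (hlo _ hj) (hhi _ hj) _ (hμ _ hj) (hdist _ hj)
        (v := η ^ k) (by rw [hηk]; exact char_pow_n _)
      have h0 : j ≠ 0 := by have := (Finset.mem_Icc.1 hj).1; omega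
      rw [h1, sub_self, mul_zero, zero_add]
      simp only [F, h0, if_false]
    rw [Finset.sum_congr rfl hj]
    have h0 : (1 : ℂ) = ((kraw n d 0 (hammingNorm (x + l • y)) : ℝ) : ℂ) * F 0 (η ^ k) t := by
      simp [F, kraw]
    have h2 : (1 : ℂ) + ∑ j ∈ Finset.Icc 1 d, ((kraw n d j (hammingNorm (x + l • y)) : ℝ) : ℂ) * F j (η ^ k) t =
        ∑ j ∈ Finset.range (d + 1), ((kraw n d j (hammingNorm (x + l • y)) : ℝ) : ℂ) * F j (η ^ k) t := by
      rw [Finset.range_eq_Ico, Finset.sum_eq_sum_Ico_succ_bot (Nat.succ_pos d), ← h0]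
      congr 1
    rw [h2]
    simp_rw [krawChar, Finset.sum_mul]
    rw [Finset.sum_comm, Finset.mul_sum]
    refine Finset.sum_congr rfl fun ξ _ => ?_
    rw [Finset.sum_eq_single (hammingNorm ξ)]
    · rw [if_pos rfl, hηk, dotProduct_add, AddChar.map_add_eq_mul, mul_add, AddChar.map_add_eq_mul,
        dotProduct_smul, nsmul_eq_mul]
      push_cast
      ring
    · intro b _ hb
      rw [if_neg hb.symm, zero_mul]
    · intro h
      exact absurd (Finset.mem_range.2 (Nat.lt_succ_of_le (hammingNorm_le ξ))) h
  rw [Finset.sum_congr rfl fun k hk => Finset.sum_congr rfl (hbr k hk)]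
  rw [hmain, mul_assoc]
  congr 1
  -- collapse the double sum
  have hrange : ∀ f : ZMod n → ℂ, ∑ k ∈ Finset.range n, f (k : ZMod n) = ∑ b : ZMod n, f b := by
    intro f
    refine Finset.sum_bij' (fun k _ => (k : ZMod n)) (fun b _ => b.val) ?_ ?_ ?_ ?_ ?_
    · intros; exact Finset.mem_univ _
    · intro b _; exact Finset.mem_range.2 (ZMod.val_lt b)
    · intro k hk; exact ZMod.val_cast_of_lt (Finset.mem_range.1 hk)
    · intro b _; exact ZMod.natCast_zmod_val b
    · intros; rfl
  simp_rw [hηk]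
  rw [hrange (fun b => ∑ l ∈ Finset.range n, ∑ ξ : Fin d → ZMod n, ZMod.stdAddChar (ξ ⬝ᵥ x) *
        (ZMod.stdAddChar ((l : ZMod n) * (b + ξ ⬝ᵥ y)) / n * F (hammingNorm ξ) (ZMod.stdAddChar b) t))]
  simp_rw [fun b : ZMod n => hrange (fun c => ∑ ξ : Fin d → ZMod n, ZMod.stdAddChar (ξ ⬝ᵥ x) *
        (ZMod.stdAddChar (c * (b + ξ ⬝ᵥ y)) / n * F (hammingNorm ξ) (ZMod.stdAddChar b) t))]
  have hcol : ∀ b : ZMod n, ∑ c : ZMod n, ∑ ξ : Fin d → ZMod n, (ZMod.stdAddChar (ξ ⬝ᵥ x) : ℂ) *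
        (ZMod.stdAddChar (c * (b + ξ ⬝ᵥ y)) / n * F (hammingNorm ξ) (ZMod.stdAddChar b) t) =
      ∑ ξ : Fin d → ZMod n, if b = -(ξ ⬝ᵥ y) then (ZMod.stdAddChar (ξ ⬝ᵥ x) : ℂ) *
        F (hammingNorm ξ) (ZMod.stdAddChar b) t else 0 := by
    intro b
    rw [Finset.sum_comm]
    refine Finset.sum_congr rfl fun ξ _ => ?_
    rw [← Finset.mul_sum, ← Finset.sum_mul, ← Finset.sum_div,
      AddChar.sum_mulShift _ (ZMod.isPrimitive_stdAddChar n)]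
    by_cases h : b = -(ξ ⬝ᵥ y)
    · rw [if_pos h, if_pos (by rw [h, neg_add_cancel]), ZMod.card, div_self hn0, one_mul]
    · rw [if_neg h, if_neg (fun h' => h (eq_neg_of_add_eq_zero_left h'))]
      simp
  simp_rw [hcol]
  rw [Finset.sum_comm, Finset.mul_sum]
  refine Finset.sum_congr rfl fun ξ _ => ?_
  rw [Finset.sum_ite_eq', if_pos (Finset.mem_univ _)]
  simp only [G, s, a]
  ring
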